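/- Let Z be a real random variable whose moment generating function ψ(u) = E[e^{uZ}] is finite for all u in an open interval containing 0. For n ≥ 1 let κ_n denote the n-th cumulant of Z, i.e., the n-th derivative at u = 0 of the cumulant generating function u ↦ log E[e^{uZ}]. Then for every n ≥ 1 the n-th moment of Z satisfies E[Z^n] = Γ_n(κ_1, …, κ_n), where Γ_n are the Kendall polynomials. -/

import Mathlib

/-!
Write the moment generating function as `ψ = exp ∘ K`, with `K` the cumulant generating function.
Leibniz' rule applied to `ψ' = ψ K'` shows that the quotients `ψ⁽ⁿ⁾ / ψ` satisfy the recurrence of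
the Kendall polynomials evaluated at `K', K'', …`. Since `ψ⁽ⁿ⁾(u) = E[Zⁿ e^{uZ}]`, this expresses
the exponentially weighted moments at every interior point `u`; at `u = 0` the weight disappears
and `ψ(0) = 1`.
-/

open MeasureTheory ProbabilityTheory

/-- The Kendall polynomials `Γ_n`, expressing moments in terms of cumulants:
`Γ_0 = 1` and `Γ_{n+1}(x_1,…,x_{n+1}) = Σ_{j=0}^n C(n,j) Γ_j(x_1,…,x_j) x_{n+1-j}`.
Only the values `x 1, …, x n` of the argument function are used by `kendall n x`. -/
noncomputable def kendall : ℕ → (ℕ → ℝ) → ℝ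
  | 0, _ => 1
  | n + 1, x =>
      ∑ j ∈ (Finset.range (n + 1)).attach,
        (n.choose j.1 : ℝ) * kendall j.1 x * x (n + 1 - j.1)
decreasing_by exact Finset.mem_range.mp j.2

theorem kendall_zero (x : ℕ → ℝ) : kendall 0 x = 1 := by
  rw [kendall]

theorem kendall_succ (n : ℕ) (x : ℕ → ℝ) :
    kendall (n + 1) x =
      ∑ j ∈ Finset.range (n + 1), (n.choose j : ℝ) * kendall j x * x (n + 1 - j) := by
  rw [kendall]
  exact Finset.sum_attach _ fun j => (n.choose j : ℝ) * kendall j x * x (n + 1 - j)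

theorem iteratedDeriv_exp_comp_eq_kendall {g : ℝ → ℝ} {x : ℝ} {n : ℕ}
    (hg : ContDiffAt ℝ n g x) :
    iteratedDeriv n (fun u => Real.exp (g u)) x =
      Real.exp (g x) * kendall n fun j => iteratedDeriv j g x := by
  induction n using Nat.strong_induction_on with
  | _ n ih =>
    cases n with
    | zero => rw [iteratedDeriv_zero, kendall_zero, mul_one]
    | succ n =>
      have hderiv : deriv (fun u => Real.exp (g u)) =ᶠ[nhds x]
          fun u => Real.exp (g u) * deriv g u := by
        filter_upwards [hg.eventually (by simp)] with u hu
        exact deriv_exp (hu.differentiableAt (by simp))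
      have hexp : ContDiffAt ℝ n (fun u => Real.exp (g u)) x :=
        (hg.of_le (by simp)).exp
      have hg' : ContDiffAt ℝ n (deriv g) x := ContDiffAt.derivWithin hg le_rfl
      rw [iteratedDeriv_succ', hderiv.iteratedDeriv_eq, iteratedDeriv_fun_mul hexp hg',
        kendall_succ, Finset.mul_sum]
      refine Finset.sum_congr rfl fun j hj => ?_
      have hjn : j ≤ n := Finset.mem_range_succ_iff.mp hj
      have hgj : ContDiffAt ℝ j g x := hg.of_le (mod_cast Nat.le_succ_of_le hjn)
      rw [ih j (Nat.lt_succ_of_le hjn) hgj, ← iteratedDeriv_succ', Nat.sub_add_comm hjn]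
      ring

section MomentGeneratingFunction

variable {Ω : Type*} {mΩ : MeasurableSpace Ω} {μ : Measure Ω} {Z : Ω → ℝ}

theorem mem_interior_integrableExpSet_iff {u : ℝ} :
    u ∈ interior (integrableExpSet Z μ) ↔
      ∃ ε : ℝ, 0 < ε ∧ ∀ v : ℝ, |v - u| < ε → Integrable (fun ω => Real.exp (v * Z ω)) μ := by
  rw [mem_interior_iff_mem_nhds, Metric.mem_nhds_iff]
  rfl

theorem exp_cgf_eventuallyEq_mgf [NeZero μ] {u : ℝ} (hu : u ∈ interior (integrableExpSet Z μ)) :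
    (fun v => Real.exp (cgf Z μ v)) =ᶠ[nhds u] mgf Z μ := by
  filter_upwards [isOpen_interior.mem_nhds hu] with v hv
  have hint : v ∈ integrableExpSet Z μ := interior_subset hv
  exact exp_cgf hint

theorem moment_eq_kendall_cumulants_general [NeZero μ] {u : ℝ}
    (hu : u ∈ interior (integrableExpSet Z μ)) (n : ℕ) :
    ∫ ω, Z ω ^ n * Real.exp (u * Z ω) ∂μ =
      mgf Z μ u * kendall n fun j => iteratedDeriv j (cgf Z μ) u := by
  have hexp := exp_cgf_eventuallyEq_mgf hu
  rw [← iteratedDeriv_mgf hu, ← hexp.iteratedDeriv_eq, ← hexp.eq_of_nhds]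
  exact iteratedDeriv_exp_comp_eq_kendall (analyticAt_cgf hu).contDiffAt

end MomentGeneratingFunction

/-- If the moment generating function of a real random variable `Z` is finite on an open
interval around `0`, and `κ_n` denotes the `n`-th cumulant of `Z` (the `n`-th derivative at `0`
of the cumulant generating function `u ↦ log E[e^{uZ}]`), then for every `n ≥ 1` the `n`-th
moment satisfies `E[Z^n] = Γ_n(κ_1, …, κ_n)`, where `Γ_n` are the Kendall polynomials. -/
theorem moment_eq_kendall_cumulants
    {Ω : Type*} {mΩ : MeasurableSpace Ω} (μ : Measure Ω) [IsProbabilityMeasure μ]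
    (Z : Ω → ℝ) (hZ : Measurable Z)
    (hmgf : ∃ ε : ℝ, 0 < ε ∧ ∀ u : ℝ, |u| < ε →
      Integrable (fun ω => Real.exp (u * Z ω)) μ)
    (n : ℕ) (hn : 1 ≤ n) :
    ∫ ω, Z ω ^ n ∂μ = kendall n fun j => iteratedDeriv j (cgf Z μ) 0 := by
  have h0 : 0 ∈ interior (integrableExpSet Z μ) :=
    mem_interior_integrableExpSet_iff.mpr (by simpa only [sub_zero] using hmgf)
  simpa using moment_eq_kendall_cumulants_general h0 n
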